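/- arXiv:math/0608080 — 4 statements merged into one kernel-verified Lean document; each statement's English description precedes it below -/
import Mathlib

section
/- (Lovász's result for collections, modified-deck form.) Let N = C(n,2) and suppose 2m > N. Let P and Q be multisets of simple graphs on Fin n in which every member has exactly m edges. If the modified 1-decks of P and Q agree up to isomorphism (i.e. the multiset unions of MD_1 over the members of P and of Q have equal images under the quotient map to isomorphism classes), then P and Q are equal up to isomorphism (the multisets of isomorphism classes of the members of P and of Q coincide). -/
/-!
Identify graphs with subsets of the set `U` of all possible edges. Summing a function `f` over the
deck of `s` means removing an element of `s` and then adding one. This operator `T` is compared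
with `DᵀD`, which first adds an element and then removes one, where `(D f)(t) = ∑ e ∈ t, f(t \ e)`.
Proper swaps contribute equally to both, so `T f s = (2|s| - |U|) f s + (DᵀD f) s` and
`⟨f, T f⟩ = ∑ s, (2|s| - |U|) (f s)² + ∑ t, (D f t)²`.

Let `f` be the difference of the multiplicity functions of two collections of labelled graphs with
the same deck. Summing `f` over the two equal decks gives `⟨f, T f⟩ = 0`. As `f` is supported on
sets with `2|s| > |U|`, it vanishes, so the labelled collections are equal.

For decks known up to isomorphism, replace each graph by all its relabelings. This commutes with
taking decks, and two collections agree up to isomorphism exactly when their relabelings are equal.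
-/

open Finset

noncomputable section
open scoped Classical

/-- Two simple graphs on `Fin n` are related iff they are isomorphic. -/
def isoSetoid (n : ℕ) : Setoid (SimpleGraph (Fin n)) where
  r G H := Nonempty (G ≃g H)
  iseqv := ⟨fun _ => ⟨SimpleGraph.Iso.refl⟩, fun h => ⟨h.some.symm⟩,
    fun h h' => ⟨h.some.trans h'.some⟩⟩

/-- The isomorphism class of a simple graph on `Fin n`. -/
def isoClass {n : ℕ} (G : SimpleGraph (Fin n)) : Quotient (isoSetoid n) :=
  Quotient.mk (isoSetoid n) G

/-- The `i`-edge deck `ED_i(G)`: the multiset of graphs `G − X` over all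
`i`-element subsets `X` of the edge set of `G`. -/
def ED {n : ℕ} (i : ℕ) (G : SimpleGraph (Fin n)) : Multiset (SimpleGraph (Fin n)) :=
  (G.edgeFinset.powersetCard i).val.map fun X =>
    G.deleteEdges (X : Set (Sym2 (Fin n)))

/-- The perturbed `i`-deck `PD_i(G)`: the multiset of graphs `(G − X) + Y` over all
pairs of an `i`-element subset `X` of the edges of `G` and an `i`-element set `Y`
of non-edges of `G`. -/
def PD {n : ℕ} (i : ℕ) (G : SimpleGraph (Fin n)) : Multiset (SimpleGraph (Fin n)) :=
  ((G.edgeFinset.powersetCard i) ×ˢ (Gᶜ.edgeFinset.powersetCard i)).val.map fun p =>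
    SimpleGraph.fromEdgeSet
      (((G.edgeFinset \ p.1) ∪ p.2 : Finset (Sym2 (Fin n))) : Set (Sym2 (Fin n)))

/-- The modified `i`-deck `MD_i(G)`: the multiset of graphs `(G − X) + Y` over all
pairs of an `i`-element subset `X` of the edges of `G` and an `i`-element set `Y`
of non-edges of `G − X` (so `Y` may reuse edges of `X`). -/
def MD {n : ℕ} (i : ℕ) (G : SimpleGraph (Fin n)) : Multiset (SimpleGraph (Fin n)) :=
  (G.edgeFinset.powersetCard i).val.bind fun X =>
    ((G.deleteEdges (X : Set (Sym2 (Fin n))))ᶜ.edgeFinset.powersetCard i).val.map fun Y =>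
      SimpleGraph.fromEdgeSet
        (((G.edgeFinset \ X) ∪ Y : Finset (Sym2 (Fin n))) : Set (Sym2 (Fin n)))

/-! ### The swap deck of a finite set -/

section SwapDeck

variable {β R : Type*} [DecidableEq β]

/-- The set-system version of the modified `1`-deck: the multiset of all `(s \ {e}) ∪ {x}` with
`e ∈ s` and `x ∈ U \ (s \ {e})`. As `x = e` is allowed, `s` itself occurs `#s` times. -/
def swapDeck (U s : Finset β) : Multiset (Finset β) :=
  s.val.bind fun e => (U \ s.erase e).val.map fun x => insert x (s.erase e)

/-- The down operator of the Boolean lattice: the sum of `f` over the sets obtained from `t` by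
removing one element. -/
def shadowSum [AddCommMonoid R] (f : Finset β → R) (t : Finset β) : R :=
  ∑ e ∈ t, f (t.erase e)

lemma sum_map_swapDeck [AddCommMonoid R] (f : Finset β → R) (U s : Finset β) :
    ((swapDeck U s).map f).sum = ∑ e ∈ s, ∑ x ∈ U \ s.erase e, f (insert x (s.erase e)) := by
  simp only [swapDeck, Multiset.map_bind, Multiset.sum_bind, Multiset.map_map, Function.comp_def,
    Finset.sum_map_val]

lemma shadowSum_insert [AddCommMonoid R] (f : Finset β → R) {s : Finset β} {x : β} (hx : x ∉ s) :
    shadowSum f (insert x s) = f s + ∑ e ∈ s, f (insert x (s.erase e)) := by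
  rw [shadowSum, sum_insert hx, erase_insert hx]
  congr 1
  refine sum_congr rfl fun e he => ?_
  rw [erase_insert_of_ne (ne_of_mem_of_not_mem he hx).symm]

lemma sum_map_swapDeck_of_subset [AddCommMonoid R] (f : Finset β → R) {U s : Finset β}
    (hs : s ⊆ U) :
    ((swapDeck U s).map f).sum
      = #s • f s + ∑ e ∈ s, ∑ x ∈ U \ s, f (insert x (s.erase e)) := by
  rw [sum_map_swapDeck, ← sum_const, ← sum_add_distrib]
  refine sum_congr rfl fun e he => ?_
  rw [sdiff_erase (hs he), sum_insert (by simp [he]), insert_erase he]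

/-- Both ways of composing "remove an element" and "add an element" run over the same proper
swaps; they differ only in how often they return to `s`. -/
lemma sum_map_swapDeck_eq_add_sum_shadowSum [CommRing R] (f : Finset β → R) {U s : Finset β}
    (hs : s ⊆ U) :
    ((swapDeck U s).map f).sum
      = (2 * #s - #U : R) * f s + ∑ x ∈ U \ s, shadowSum f (insert x s) := by
  have hshadow : ∑ x ∈ U \ s, shadowSum f (insert x s)
      = (#U - #s : R) * f s + ∑ e ∈ s, ∑ x ∈ U \ s, f (insert x (s.erase e)) := by
    rw [sum_congr rfl fun x hx => shadowSum_insert f (mem_sdiff.1 hx).2, sum_add_distrib,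
      sum_const, card_sdiff_of_subset hs, nsmul_eq_mul, Nat.cast_sub (card_le_card hs), sum_comm]
  rw [sum_map_swapDeck_of_subset f hs, hshadow, nsmul_eq_mul]
  ring

lemma sum_powerset_sum_sdiff_comm [AddCommMonoid R] (U : Finset β) (F : Finset β → β → R) :
    ∑ s ∈ U.powerset, ∑ x ∈ U \ s, F s x = ∑ t ∈ U.powerset, ∑ x ∈ t, F (t.erase x) x := by
  rw [sum_sigma', sum_sigma']
  refine sum_bij' (fun p _ => ⟨insert p.2 p.1, p.2⟩) (fun p _ => ⟨p.1.erase p.2, p.2⟩)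
    ?_ ?_ ?_ ?_ ?_
  all_goals
    rintro ⟨s, x⟩ hp
    simp only [mem_sigma, mem_powerset, mem_sdiff] at hp ⊢
    grind [erase_insert, insert_erase]

lemma sum_mul_sum_insert_eq_sum_shadowSum_mul [CommRing R] (U : Finset β) (f g : Finset β → R) :
    ∑ s ∈ U.powerset, f s * ∑ x ∈ U \ s, g (insert x s)
      = ∑ t ∈ U.powerset, shadowSum f t * g t := by
  simp only [mul_sum, shadowSum, sum_mul]
  rw [sum_powerset_sum_sdiff_comm U fun s x => f s * g (insert x s)]
  refine sum_congr rfl fun t _ => sum_congr rfl fun x hx => ?_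
  rw [insert_erase hx]

lemma sum_mul_sum_map_swapDeck [CommRing R] (U : Finset β) (f : Finset β → R) :
    ∑ s ∈ U.powerset, f s * ((swapDeck U s).map f).sum
      = ∑ s ∈ U.powerset, ((2 * #s - #U : R) * f s ^ 2 + shadowSum f s ^ 2) := by
  have hterm : ∀ s ∈ U.powerset, f s * ((swapDeck U s).map f).sum
      = (2 * #s - #U : R) * f s ^ 2 + f s * ∑ x ∈ U \ s, shadowSum f (insert x s) := fun s hs => by
    rw [sum_map_swapDeck_eq_add_sum_shadowSum f (mem_powerset.1 hs)]
    ring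
  rw [sum_congr rfl hterm, sum_add_distrib, sum_mul_sum_insert_eq_sum_shadowSum_mul,
    ← sum_add_distrib]
  simp only [sq]

lemma eq_zero_of_sum_mul_sum_map_swapDeck_eq_zero [CommRing R] [LinearOrder R]
    [IsStrictOrderedRing R] {U : Finset β} {f : Finset β → R}
    (hf : ∀ s ⊆ U, f s ≠ 0 → #U < 2 * #s)
    (h : ∑ s ∈ U.powerset, f s * ((swapDeck U s).map f).sum = 0) :
    ∀ s ⊆ U, f s = 0 := by
  have hpos : ∀ s ⊆ U, f s ≠ 0 → 0 < (2 * #s - #U : R) * f s ^ 2 := fun s hs hne =>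
    mul_pos (sub_pos.2 (mod_cast hf s hs hne)) (sq_pos_of_ne_zero hne)
  have hnonneg : ∀ s ⊆ U, 0 ≤ (2 * #s - #U : R) * f s ^ 2 := fun s hs => by
    by_cases hzero : f s = 0
    · simp [hzero]
    · exact (hpos s hs hzero).le
  intro s hs
  by_contra hne
  rw [sum_mul_sum_map_swapDeck, sum_eq_zero_iff_of_nonneg fun t ht =>
    add_nonneg (hnonneg t (mem_powerset.1 ht)) (sq_nonneg _)] at h
  exact (add_pos_of_pos_of_nonneg (hpos s hs hne) (sq_nonneg _)).ne' (h s (mem_powerset.2 hs))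

lemma sum_map_eq_sum_count_mul [Semiring R] {S : Finset β} {A : Multiset β}
    (hA : ∀ a ∈ A, a ∈ S) (F : β → R) : (A.map F).sum = ∑ a ∈ S, (A.count a : R) * F a := by
  simp only [sum_multiset_map_count, nsmul_eq_mul]
  refine sum_subset (fun a ha => hA a (Multiset.mem_toFinset.1 ha)) fun a _ ha => ?_
  rw [Multiset.count_eq_zero.2 (mt Multiset.mem_toFinset.2 ha), Nat.cast_zero, zero_mul]

theorem eq_of_bind_swapDeck_eq {U : Finset β} {A B : Multiset (Finset β)}
    (hA : ∀ s ∈ A, s ⊆ U ∧ #U < 2 * #s) (hB : ∀ s ∈ B, s ⊆ U ∧ #U < 2 * #s)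
    (h : A.bind (swapDeck U) = B.bind (swapDeck U)) : A = B := by
  let f : Finset β → ℤ := fun s => A.count s - B.count s
  have hsupp : ∀ s, f s ≠ 0 → s ⊆ U ∧ #U < 2 * #s := fun s hne => by
    by_contra hs
    exact hne (by simp [f, Multiset.count_eq_zero.2 (mt (hA s) hs),
      Multiset.count_eq_zero.2 (mt (hB s) hs)])
  have hdeck : ∀ C : Multiset (Finset β), (∀ s ∈ C, s ⊆ U ∧ #U < 2 * #s) →
      ((C.bind (swapDeck U)).map f).sum
        = ∑ s ∈ U.powerset, (C.count s : ℤ) * ((swapDeck U s).map f).sum := fun C hC => by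
    rw [Multiset.map_bind, Multiset.sum_bind,
      sum_map_eq_sum_count_mul fun s hs => mem_powerset.2 (hC s hs).1]
  have hform : ∑ s ∈ U.powerset, f s * ((swapDeck U s).map f).sum = 0 := by
    simp only [f, sub_mul, sum_sub_distrib]
    rw [← hdeck A hA, ← hdeck B hB, h, sub_self]
  ext s
  suffices f s = 0 from Int.ofNat_inj.1 (sub_eq_zero.1 this)
  by_contra hne
  exact hne (eq_zero_of_sum_mul_sum_map_swapDeck_eq_zero (fun t _ ht => (hsupp t ht).2) hform s
    (hsupp s hne).1)

end SwapDeck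

/-! ### Labelled graphs -/

lemma edgeSet_fromEdgeSet_of_subset {V : Type*} {s : Set (Sym2 V)}
    (hs : s ⊆ (⊤ : SimpleGraph V).edgeSet) : (SimpleGraph.fromEdgeSet s).edgeSet = s := by
  rw [SimpleGraph.edgeSet_top] at hs
  rw [SimpleGraph.edgeSet_fromEdgeSet, sdiff_eq_left]
  exact Set.disjoint_left.2 hs

lemma MD_eq_bind_edgeFinset {n : ℕ} (i : ℕ) (G : SimpleGraph (Fin n)) :
    MD i G = (G.edgeFinset.powersetCard i).val.bind fun X =>
      (((⊤ : SimpleGraph (Fin n)).edgeFinset \ (G.edgeFinset \ X)).powersetCard i).val.map fun Y =>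
        SimpleGraph.fromEdgeSet (G.edgeFinset \ X ∪ Y : Finset (Sym2 (Fin n))) := by
  have hcompl : ∀ X : Finset (Sym2 (Fin n)), (G.deleteEdges X)ᶜ.edgeFinset
      = (⊤ : SimpleGraph (Fin n)).edgeFinset \ (G.edgeFinset \ X) := fun X => by
    apply coe_injective
    rw [SimpleGraph.coe_edgeFinset, ← top_sdiff, SimpleGraph.edgeSet_sdiff,
      SimpleGraph.edgeSet_deleteEdges, coe_sdiff, coe_sdiff, SimpleGraph.coe_edgeFinset,
      SimpleGraph.coe_edgeFinset]
  simp only [MD, hcompl]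

lemma map_edgeFinset_MD_one {n : ℕ} (G : SimpleGraph (Fin n)) :
    (MD 1 G).map (fun H => H.edgeFinset)
      = swapDeck (⊤ : SimpleGraph (Fin n)).edgeFinset G.edgeFinset := by
  simp only [MD_eq_bind_edgeFinset, swapDeck, powersetCard_one, Multiset.map_bind,
    Multiset.map_map, Finset.map_val, Multiset.bind_map, Function.comp_def,
    Function.Embedding.coeFn_mk, sdiff_singleton_eq_erase]
  refine Multiset.bind_congr fun e _ => Multiset.map_congr rfl fun x hx => ?_
  have hsub : ((insert x (G.edgeFinset.erase e) : Finset (Sym2 (Fin n))) : Set (Sym2 (Fin n)))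
      ⊆ (⊤ : SimpleGraph (Fin n)).edgeSet := by
    obtain ⟨hxU, -⟩ := mem_sdiff.1 (mem_def.2 hx)
    rw [coe_insert]
    exact Set.insert_subset (SimpleGraph.mem_edgeFinset.1 hxU) fun y hy =>
      SimpleGraph.edgeSet_mono le_top (SimpleGraph.mem_edgeFinset.1 (mem_of_mem_erase hy))
  apply coe_injective
  rw [union_comm, singleton_union, SimpleGraph.coe_edgeFinset, edgeSet_fromEdgeSet_of_subset hsub]

lemma eq_of_bind_MD_one_eq {n : ℕ} {P Q : Multiset (SimpleGraph (Fin n))}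
    (hP : ∀ G ∈ P, n.choose 2 < 2 * #G.edgeFinset) (hQ : ∀ G ∈ Q, n.choose 2 < 2 * #G.edgeFinset)
    (h : P.bind (MD 1) = Q.bind (MD 1)) : P = Q := by
  have hinj : Function.Injective fun G : SimpleGraph (Fin n) => G.edgeFinset :=
    fun _ _ => SimpleGraph.edgeFinset_inj.1
  have hlarge : ∀ R : Multiset (SimpleGraph (Fin n)),
      (∀ G ∈ R, n.choose 2 < 2 * #G.edgeFinset) → ∀ s ∈ R.map fun G => G.edgeFinset,
        s ⊆ (⊤ : SimpleGraph (Fin n)).edgeFinset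
          ∧ #(⊤ : SimpleGraph (Fin n)).edgeFinset < 2 * #s := fun R hR s hs => by
    obtain ⟨G, hG, rfl⟩ := Multiset.mem_map.1 hs
    rw [SimpleGraph.card_edgeFinset_top_eq_card_choose_two, Fintype.card_fin]
    exact ⟨SimpleGraph.edgeFinset_mono le_top, hR G hG⟩
  refine Multiset.map_injective hinj (eq_of_bind_swapDeck_eq (hlarge P hP) (hlarge Q hQ) ?_)
  simpa only [Multiset.bind_map, Multiset.map_bind, map_edgeFinset_MD_one] using
    congrArg (Multiset.map fun G => G.edgeFinset) h

/-! ### Relabelings -/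

section Relabel

variable {V W : Type*}

lemma map_equiv_eq_iff {σ : V ≃ W} {G : SimpleGraph V} {H : SimpleGraph W} :
    G.map σ = H ↔ ∀ a b, H.Adj (σ a) (σ b) ↔ G.Adj a b := by
  have hadj : ∀ a b, (G.map σ).Adj (σ a) (σ b) ↔ G.Adj a b := fun _ _ =>
    (SimpleGraph.Iso.map σ G).map_adj_iff
  refine ⟨?_, fun h => ?_⟩
  · rintro rfl
    exact hadj
  · ext a b
    obtain ⟨a, rfl⟩ := σ.surjective a
    obtain ⟨b, rfl⟩ := σ.surjective b
    rw [hadj, h]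

lemma map_eq_of_iso {G : SimpleGraph V} {H : SimpleGraph W} (e : G ≃g H) :
    G.map e.toEquiv = H :=
  map_equiv_eq_iff.2 fun _ _ => e.map_adj_iff

lemma mk_mem_image_map_equiv {σ : V ≃ W} {X : Set (Sym2 V)} {a b : V} :
    s(σ a, σ b) ∈ Sym2.map σ '' X ↔ s(a, b) ∈ X :=
  (Sym2.map.injective σ.injective).mem_set_image (a := s(a, b))

lemma map_equiv_fromEdgeSet (σ : V ≃ W) (X : Set (Sym2 V)) :
    (SimpleGraph.fromEdgeSet X).map σ = SimpleGraph.fromEdgeSet (Sym2.map σ '' X) :=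
  map_equiv_eq_iff.2 fun a b => by
    rw [SimpleGraph.fromEdgeSet_adj, SimpleGraph.fromEdgeSet_adj, mk_mem_image_map_equiv,
      σ.injective.ne_iff]

lemma edgeFinset_map_equiv (σ : V ≃ W) (G : SimpleGraph V) [Fintype G.edgeSet]
    [Fintype (G.map σ).edgeSet] :
    (G.map σ).edgeFinset = G.edgeFinset.map σ.toEmbedding.sym2Map :=
  coe_injective <| by
    rw [coe_map, SimpleGraph.coe_edgeFinset, SimpleGraph.coe_edgeFinset]
    exact SimpleGraph.edgeSet_map σ.toEmbedding G

lemma edgeFinset_top_map_equiv (σ : V ≃ W) [Fintype (⊤ : SimpleGraph V).edgeSet]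
    [Fintype (⊤ : SimpleGraph W).edgeSet] :
    (⊤ : SimpleGraph W).edgeFinset
      = (⊤ : SimpleGraph V).edgeFinset.map σ.toEmbedding.sym2Map := by
  have htop : (⊤ : SimpleGraph V).map σ = ⊤ := map_equiv_eq_iff.2 fun _ _ => σ.injective.ne_iff
  apply coe_injective
  rw [coe_map, SimpleGraph.coe_edgeFinset, SimpleGraph.coe_edgeFinset, ← htop]
  exact SimpleGraph.edgeSet_map σ.toEmbedding ⊤

variable [Fintype V]

/-- The multiset of the labelled graphs `G.map σ` over all vertex permutations `σ`; each labelled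
copy of `G` occurs as often as `G` has automorphisms. -/
def relabelings (G : SimpleGraph V) : Multiset (SimpleGraph V) :=
  univ.val.map fun σ : Equiv.Perm V => G.map σ

lemma relabelings_eq_of_iso {G H : SimpleGraph V} (e : G ≃g H) :
    relabelings G = relabelings H := by
  have hmap : ∀ σ : Equiv.Perm V, G.map (Equiv.mulRight e.toEquiv σ) = H.map σ := fun σ =>
    (SimpleGraph.map_map (G := G) e.toEquiv σ).symm.trans
      (congrArg (SimpleGraph.map σ) (map_eq_of_iso e))
  rw [relabelings, ← Multiset.map_univ_val_equiv (Equiv.mulRight e.toEquiv), Multiset.map_map]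
  exact Multiset.map_congr rfl fun σ _ => hmap σ

lemma card_edgeFinset_of_mem_relabelings {G H : SimpleGraph V} (h : H ∈ relabelings G) :
    #H.edgeFinset = #G.edgeFinset := by
  obtain ⟨σ, -, rfl⟩ := Multiset.mem_map.1 h
  rw [edgeFinset_map_equiv, card_map]

end Relabel

section IsoClass

variable {n : ℕ}

lemma isoClass_map (σ : Equiv.Perm (Fin n)) (G : SimpleGraph (Fin n)) :
    isoClass (G.map σ) = isoClass G :=
  Quotient.sound (s := isoSetoid n) ⟨(SimpleGraph.Iso.map σ G).symm⟩

lemma map_isoClass_bind_relabelings (P : Multiset (SimpleGraph (Fin n))) :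
    (P.bind relabelings).map isoClass = n.factorial • P.map isoClass := by
  induction P using Multiset.induction_on with
  | empty => simp
  | cons G P ih =>
    have hG : (relabelings G).map isoClass = n.factorial • {isoClass G} := by
      simp [relabelings, isoClass_map, Multiset.nsmul_singleton, Fintype.card_perm]
    rw [Multiset.cons_bind, Multiset.map_add, ih, hG, ← nsmul_add, Multiset.singleton_add,
      Multiset.map_cons]

lemma bind_relabelings_eq_iff {P Q : Multiset (SimpleGraph (Fin n))} :
    P.bind relabelings = Q.bind relabelings ↔ P.map isoClass = Q.map isoClass := by
  constructor <;> intro h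
  · apply nsmul_right_injective n.factorial_ne_zero
    simpa only [map_isoClass_bind_relabelings] using congrArg (Multiset.map isoClass) h
  · let F : Quotient (isoSetoid n) → Multiset (SimpleGraph (Fin n)) :=
      Quotient.lift relabelings fun _ _ e => relabelings_eq_of_iso e.some
    have hF : ∀ R : Multiset (SimpleGraph (Fin n)), (R.map isoClass).bind F = R.bind relabelings :=
      fun R => Multiset.bind_map _ _ _
    rw [← hF, h, hF]

lemma MD_map_equiv (i : ℕ) (σ : Equiv.Perm (Fin n)) (G : SimpleGraph (Fin n)) :
    MD i (G.map σ) = (MD i G).map fun H => H.map σ := by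
  rw [MD_eq_bind_edgeFinset, edgeFinset_map_equiv, edgeFinset_top_map_equiv σ, powersetCard_map,
    Finset.map_val, Multiset.bind_map, MD_eq_bind_edgeFinset, Multiset.map_bind]
  refine Multiset.bind_congr fun X _ => ?_
  simp only [RelEmbedding.coe_toEmbedding, mapEmbedding_apply, ← Finset.map_sdiff,
    powersetCard_map, Finset.map_val, Multiset.map_map, Function.comp_def, ← Finset.map_union,
    map_equiv_fromEdgeSet, coe_map]
  rfl

lemma bind_MD_bind_relabelings (i : ℕ) (P : Multiset (SimpleGraph (Fin n))) :
    (P.bind relabelings).bind (MD i) = (P.bind (MD i)).bind relabelings := by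
  rw [Multiset.bind_assoc, Multiset.bind_assoc]
  refine Multiset.bind_congr fun G _ => ?_
  simp only [relabelings, Multiset.bind_map, MD_map_equiv]
  exact Multiset.bind_map_comm _ _

end IsoClass

theorem lovasz_collections_modified_deck_general (n : ℕ) (P Q : Multiset (SimpleGraph (Fin n)))
    (hP : ∀ G ∈ P, n.choose 2 < 2 * #G.edgeFinset)
    (hQ : ∀ G ∈ Q, n.choose 2 < 2 * #G.edgeFinset)
    (h : (P.bind (MD 1)).map isoClass = (Q.bind (MD 1)).map isoClass) :
    P.map isoClass = Q.map isoClass := by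
  have hlarge : ∀ R : Multiset (SimpleGraph (Fin n)),
      (∀ G ∈ R, n.choose 2 < 2 * #G.edgeFinset) →
      ∀ H ∈ R.bind relabelings, n.choose 2 < 2 * #H.edgeFinset := fun R hR H hH => by
    obtain ⟨G, hG, hHG⟩ := Multiset.mem_bind.1 hH
    rw [card_edgeFinset_of_mem_relabelings hHG]
    exact hR G hG
  rw [← bind_relabelings_eq_iff, ← bind_MD_bind_relabelings, ← bind_MD_bind_relabelings] at h
  exact bind_relabelings_eq_iff.1 (eq_of_bind_MD_one_eq (hlarge P hP) (hlarge Q hQ) h)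

/-- Lovász's result for collections, modified-deck form: if `2m > C(n,2)` and the
modified `1`-decks of two collections of `m`-edge graphs agree up to isomorphism,
then the collections are equal up to isomorphism. -/
theorem lovasz_collections_modified_deck (n m : ℕ) (hm : 2 * m > n.choose 2)
    (P Q : Multiset (SimpleGraph (Fin n)))
    (hP : ∀ G ∈ P, G.edgeFinset.card = m) (hQ : ∀ G ∈ Q, G.edgeFinset.card = m)
    (h : (P.bind (MD 1)).map isoClass = (Q.bind (MD 1)).map isoClass) :
    P.map isoClass = Q.map isoClass :=
  lovasz_collections_modified_deck_general n P Q (fun G hG => (hP G hG).symm ▸ hm)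
    (fun G hG => (hQ G hG).symm ▸ hm) h

end
end

section
/- Let G and H be simple graphs on Fin n, each with exactly m edges. If the modified 1-decks MD_1(G) and MD_1(H) agree up to isomorphism, then the 1-edge decks ED_1(G) and ED_1(H) agree up to isomorphism. (The 1-edge deck of a graph can be constructed from its modified 1-deck.) -/
/-!
Record a multiset of graphs by the sums over it of isomorphism-invariant functions ("statistics").
Let `W` be the `0/1` matrix whose entry at `(K, A)` says that `K` arises from `A` by deleting `i`
edges. Summing `g` over the `i`-edge deck gives `Wᵀ g`, and summing `f` over the modified `i`-deck
gives `Wᵀ W f`, because adding edges back is the transpose of deleting them. Over `ℚ` the matrices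
`Wᵀ W` and `Wᵀ` have the same range, so `Wᵀ g = Wᵀ W f` for some `f`, and averaging `f` over all
relabellings makes it invariant when `g` is. Hence every statistic of the `i`-edge deck is a
statistic of the modified `i`-deck.
-/

open Finset

noncomputable section
open scoped Classical

open Matrix

lemma multiset_eq_of_forall_sum_map_eq {β : Type*} (R : Type*) [AddCommMonoidWithOne R] [CharZero R]
    {P Q : Multiset β} (h : ∀ φ : β → R, (P.map φ).sum = (Q.map φ).sum) : P = Q := by
  ext b
  have count_eq_sum (S : Multiset β) :
      (S.count b : R) = (S.map fun x => if b = x then 1 else 0).sum := by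
    induction S using Multiset.induction_on with
    | empty => simp
    | cons x S ih => simp [Multiset.count_cons, ih, add_comm]
  exact Nat.cast_injective (R := R) (by rw [count_eq_sum, count_eq_sum, h])

section InvariantMatrices

variable {Γ κ α R 𝕜 : Type*} [Fintype α]

lemma range_mulVecLin_transpose_mul_self [Fintype κ] [Field 𝕜] [LinearOrder 𝕜]
    [IsStrictOrderedRing 𝕜] (W : Matrix κ α 𝕜) :
    LinearMap.range (Wᵀ * W).mulVecLin = LinearMap.range Wᵀ.mulVecLin := by
  refine Submodule.eq_of_le_of_finrank_eq ?_ ?_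
  · rw [mulVecLin_mul]
    exact LinearMap.range_comp_le_range _ _
  · exact (rank_transpose_mul_self W).trans (rank_transpose W).symm

variable [Group Γ] [MulAction Γ κ] [MulAction Γ α]

lemma mulVec_comp_smul [NonUnitalNonAssocSemiring R] {M : Matrix κ α R}
    (hM : ∀ (γ : Γ) k a, M (γ • k) (γ • a) = M k a) (v : α → R) (γ : Γ) (k : κ) :
    (M *ᵥ fun a => v (γ • a)) k = (M *ᵥ v) (γ • k) := by
  simp only [mulVec, dotProduct, ← hM γ k]
  exact Equiv.sum_comp (MulAction.toPerm γ) fun a => M (γ • k) a * v a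

lemma mul_apply_smul_smul {l : Type*} [MulAction Γ l] [NonUnitalNonAssocSemiring R]
    {M : Matrix κ α R} {N : Matrix α l R}
    (hM : ∀ (γ : Γ) k a, M (γ • k) (γ • a) = M k a)
    (hN : ∀ (γ : Γ) a b, N (γ • a) (γ • b) = N a b) (γ : Γ) (k : κ) (b : l) :
    (M * N) (γ • k) (γ • b) = (M * N) k b := by
  simp only [mul_apply, ← hM γ k, ← hN γ _ b]
  exact (Equiv.sum_comp (MulAction.toPerm γ) fun a => M (γ • k) a * N a (γ • b)).symm

lemma exists_invariant_mulVec_eq [Finite Γ] [Field 𝕜] [CharZero 𝕜] {M : Matrix κ α 𝕜}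
    (hM : ∀ (γ : Γ) k a, M (γ • k) (γ • a) = M k a) {v : α → 𝕜}
    (hv : ∀ (γ : Γ) k, (M *ᵥ v) (γ • k) = (M *ᵥ v) k) :
    ∃ f : α → 𝕜, (∀ (γ : Γ) a, f (γ • a) = f a) ∧ M *ᵥ f = M *ᵥ v := by
  cases nonempty_fintype Γ
  refine ⟨(Fintype.card Γ : 𝕜)⁻¹ • ∑ γ : Γ, fun a => v (γ • a), fun γ a => ?_, ?_⟩
  · simp only [Pi.smul_apply, Finset.sum_apply, smul_smul]
    congr 1
    exact Equiv.sum_comp (Equiv.mulRight γ) fun δ => v (δ • a)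
  · have translate (γ : Γ) : (M *ᵥ fun a => v (γ • a)) = M *ᵥ v :=
      funext fun k => (mulVec_comp_smul hM v γ k).trans (hv γ k)
    have card_ne_zero : (Fintype.card Γ : 𝕜) ≠ 0 := Nat.cast_ne_zero.2 Fintype.card_ne_zero
    rw [mulVec_smul, mulVec_sum, Finset.sum_congr rfl fun γ _ => translate γ, Finset.sum_const,
      Finset.card_univ, ← Nat.cast_smul_eq_nsmul 𝕜, inv_smul_smul₀ card_ne_zero]

lemma exists_invariant_transpose_mul_self_mulVec_eq [Finite Γ] [Fintype κ] [Field 𝕜]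
    [LinearOrder 𝕜] [IsStrictOrderedRing 𝕜] {W : Matrix κ α 𝕜}
    (hW : ∀ (γ : Γ) k a, W (γ • k) (γ • a) = W k a) {g : κ → 𝕜}
    (hg : ∀ (γ : Γ) k, g (γ • k) = g k) :
    ∃ f : α → 𝕜, (∀ (γ : Γ) a, f (γ • a) = f a) ∧ (Wᵀ * W) *ᵥ f = Wᵀ *ᵥ g := by
  have hWt (γ : Γ) (a : α) (k : κ) : Wᵀ (γ • a) (γ • k) = Wᵀ a k := hW γ k a
  obtain ⟨v, hv⟩ : Wᵀ *ᵥ g ∈ LinearMap.range (Wᵀ * W).mulVecLin :=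
    range_mulVecLin_transpose_mul_self W ▸ ⟨g, rfl⟩
  rw [mulVecLin_apply] at hv
  rw [← hv]
  refine exists_invariant_mulVec_eq (mul_apply_smul_smul hWt hW) fun γ a => ?_
  rw [hv, ← mulVec_comp_smul hWt]
  simp only [hg]

end InvariantMatrices

section EdgeDeletion

variable {V : Type*}

/-- The action of the permutations of the vertices on graphs by relabelling. -/
instance relabelAction : MulAction (Equiv.Perm V) (SimpleGraph V) where
  smul σ A := σ.simpleGraph A
  one_smul _ := rfl
  mul_smul _ _ _ := rfl

lemma relabel_adj {σ : Equiv.Perm V} {A : SimpleGraph V} {u v : V} :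
    (σ • A).Adj u v ↔ A.Adj (σ.symm u) (σ.symm v) :=
  Iff.rfl

lemma relabel_le_relabel_iff {σ : Equiv.Perm V} {K A : SimpleGraph V} :
    σ • K ≤ σ • A ↔ K ≤ A := by
  refine ⟨fun h u v huv => ?_, fun h _ _ huv => h huv⟩
  simpa [relabel_adj] using @h (σ u) (σ v) (by simpa [relabel_adj] using huv)

/-- `IsEdgeDeletion i K A` says that `K` arises from `A` by deleting `i` edges or, equivalently,
that `A` arises from `K` by adding `i` edges. -/
def IsEdgeDeletion (i : ℕ) (K A : SimpleGraph V) : Prop :=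
  K ≤ A ∧ (A \ K).edgeSet.encard = i

variable {i : ℕ} {K A : SimpleGraph V}

lemma isEdgeDeletion_relabel_iff (σ : Equiv.Perm V) :
    IsEdgeDeletion i (σ • K) (σ • A) ↔ IsEdgeDeletion i K A := by
  have encard_eq : (σ • A \ σ • K).edgeSet.encard = (A \ K).edgeSet.encard :=
    Set.encard_congr (SimpleGraph.Iso.comap σ.symm (A \ K)).mapEdgeSet
  rw [IsEdgeDeletion, IsEdgeDeletion, relabel_le_relabel_iff, encard_eq]

lemma edgeSet_sdiff_deleteEdges {X : Set (Sym2 V)} (hX : X ⊆ A.edgeSet) :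
    (A \ A.deleteEdges X).edgeSet = X := by
  rw [SimpleGraph.edgeSet_sdiff, SimpleGraph.edgeSet_deleteEdges, Set.sdiff_sdiff_cancel_left hX]

lemma edgeSet_sup_fromEdgeSet_sdiff {Y : Set (Sym2 V)} (hY : Y ⊆ Kᶜ.edgeSet) :
    ((K ⊔ SimpleGraph.fromEdgeSet Y) \ K).edgeSet = Y := by
  have disjoint_diagSet : Disjoint Y Sym2.diagSet :=
    Set.disjoint_left.2 fun _ he => Kᶜ.not_isDiag_of_mem_edgeSet (hY he)
  have disjoint_edgeSet : Disjoint Y K.edgeSet :=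
    (SimpleGraph.disjoint_edgeSet.2 disjoint_compl_left).mono_left hY
  rw [sup_sdiff_left_self, SimpleGraph.edgeSet_sdiff, SimpleGraph.edgeSet_fromEdgeSet,
    disjoint_diagSet.sdiff_eq_left, disjoint_edgeSet.sdiff_eq_left]

lemma fromEdgeSet_sdiff_union [DecidableEq V] (A : SimpleGraph V) [Fintype A.edgeSet]
    (X Y : Finset (Sym2 V)) :
    SimpleGraph.fromEdgeSet (((A.edgeFinset \ X) ∪ Y : Finset (Sym2 V)) : Set (Sym2 V)) =
      A.deleteEdges (X : Set (Sym2 V)) ⊔ SimpleGraph.fromEdgeSet (Y : Set (Sym2 V)) := by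
  rw [Finset.coe_union, Finset.coe_sdiff, SimpleGraph.coe_edgeFinset,
    ← SimpleGraph.edgeSet_deleteEdges, SimpleGraph.fromEdgeSet_union,
    SimpleGraph.fromEdgeSet_edgeSet]

lemma mem_powersetCard_edgeFinset_iff [Fintype A.edgeSet] {X : Finset (Sym2 V)} :
    X ∈ A.edgeFinset.powersetCard i ↔ ↑X ⊆ A.edgeSet ∧ (X : Set (Sym2 V)).encard = i := by
  rw [mem_powersetCard, ← Finset.coe_subset, SimpleGraph.coe_edgeFinset,
    Set.encard_coe_eq_coe_finsetCard, Nat.cast_inj]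

variable {R : Type*}

/-- The incidence matrix of `IsEdgeDeletion i`, with rows indexed by the smaller graph: it sums a
function over the additions of `i` edges to a graph, and its transpose sums over the deletions. -/
def deletionMatrix (V R : Type*) [Zero R] [One R] (i : ℕ) :
    Matrix (SimpleGraph V) (SimpleGraph V) R :=
  Matrix.of fun K A => if IsEdgeDeletion i K A then 1 else 0

lemma deletionMatrix_relabel [Zero R] [One R] (i : ℕ) (σ : Equiv.Perm V) (K A : SimpleGraph V) :
    deletionMatrix V R i (σ • K) (σ • A) = deletionMatrix V R i K A := by
  simp only [deletionMatrix, of_apply, isEdgeDeletion_relabel_iff]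

variable [Fintype V] [DecidableEq V]

lemma sum_deleteEdges_powersetCard [AddCommMonoid R] (i : ℕ) (A : SimpleGraph V)
    [Fintype A.edgeSet] (f : SimpleGraph V → R) :
    ∑ X ∈ A.edgeFinset.powersetCard i, f (A.deleteEdges (X : Set (Sym2 V))) =
      ∑ K with IsEdgeDeletion i K A, f K := by
  refine Finset.sum_nbij' (fun X => A.deleteEdges (X : Set (Sym2 V)))
    (fun K => (A \ K).edgeFinset) (fun X hX => ?_) (fun K hK => ?_) (fun X hX => ?_)
    (fun K hK => ?_) fun _ _ => rfl
  · obtain ⟨hXA, hXi⟩ := mem_powersetCard_edgeFinset_iff.1 hX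
    refine (mem_filter_univ _).2 ⟨SimpleGraph.deleteEdges_le _, ?_⟩
    rw [edgeSet_sdiff_deleteEdges hXA, hXi]
  · obtain ⟨-, hKi⟩ := (mem_filter_univ _).1 hK
    rw [mem_powersetCard_edgeFinset_iff, SimpleGraph.coe_edgeFinset]
    exact ⟨SimpleGraph.edgeSet_mono sdiff_le, hKi⟩
  · rw [← Finset.coe_inj, SimpleGraph.coe_edgeFinset]
    exact edgeSet_sdiff_deleteEdges (mem_powersetCard_edgeFinset_iff.1 hX).1
  · obtain ⟨hKA, -⟩ := (mem_filter_univ _).1 hK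
    rw [SimpleGraph.coe_edgeFinset, SimpleGraph.deleteEdges_edgeSet, sdiff_sdiff_eq_self hKA]

lemma sum_sup_fromEdgeSet_powersetCard [AddCommMonoid R] (i : ℕ) (K : SimpleGraph V)
    [Fintype Kᶜ.edgeSet] (f : SimpleGraph V → R) :
    ∑ Y ∈ Kᶜ.edgeFinset.powersetCard i, f (K ⊔ SimpleGraph.fromEdgeSet (Y : Set (Sym2 V))) =
      ∑ A with IsEdgeDeletion i K A, f A := by
  refine Finset.sum_nbij' (fun Y => K ⊔ SimpleGraph.fromEdgeSet (Y : Set (Sym2 V)))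
    (fun A => (A \ K).edgeFinset) (fun Y hY => ?_) (fun A hA => ?_) (fun Y hY => ?_)
    (fun A hA => ?_) fun _ _ => rfl
  · obtain ⟨hYK, hYi⟩ := mem_powersetCard_edgeFinset_iff.1 hY
    refine (mem_filter_univ _).2 ⟨le_sup_left, ?_⟩
    rw [edgeSet_sup_fromEdgeSet_sdiff hYK, hYi]
  · obtain ⟨-, hAi⟩ := (mem_filter_univ _).1 hA
    have sdiff_le_compl : A \ K ≤ Kᶜ := sdiff_eq.trans_le inf_le_right
    rw [mem_powersetCard_edgeFinset_iff, SimpleGraph.coe_edgeFinset]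
    exact ⟨SimpleGraph.edgeSet_mono sdiff_le_compl, hAi⟩
  · rw [← Finset.coe_inj, SimpleGraph.coe_edgeFinset]
    exact edgeSet_sup_fromEdgeSet_sdiff (mem_powersetCard_edgeFinset_iff.1 hY).1
  · obtain ⟨hKA, -⟩ := (mem_filter_univ _).1 hA
    rw [SimpleGraph.coe_edgeFinset, SimpleGraph.fromEdgeSet_edgeSet, sup_sdiff_cancel_right hKA]

lemma deletionMatrix_mulVec [NonAssocSemiring R] (i : ℕ) (f : SimpleGraph V → R)
    (K : SimpleGraph V) :
    (deletionMatrix V R i *ᵥ f) K = ∑ A with IsEdgeDeletion i K A, f A := by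
  simp only [mulVec, dotProduct, deletionMatrix, of_apply, ite_mul, one_mul, zero_mul,
    Finset.sum_filter]

lemma deletionMatrix_transpose_mulVec [NonAssocSemiring R] (i : ℕ) (g : SimpleGraph V → R)
    (A : SimpleGraph V) :
    ((deletionMatrix V R i)ᵀ *ᵥ g) A = ∑ K with IsEdgeDeletion i K A, g K := by
  simp only [mulVec, dotProduct, transpose_apply, deletionMatrix, of_apply, ite_mul, one_mul,
    zero_mul, Finset.sum_filter]

end EdgeDeletion

section Decks

variable {n : ℕ} {R : Type*}

lemma sum_map_ED [NonAssocSemiring R] (i : ℕ) (A : SimpleGraph (Fin n))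
    (g : SimpleGraph (Fin n) → R) :
    ((ED i A).map g).sum = ((deletionMatrix (Fin n) R i)ᵀ *ᵥ g) A := by
  rw [deletionMatrix_transpose_mulVec, ← sum_deleteEdges_powersetCard]
  -- In `ED` the coercion to sets is applied to the whole multiset of edge sets, by a monadic bind.
  simp only [ED, Multiset.bind_def, Multiset.pure_def, Multiset.bind_singleton, Multiset.map_map,
    Function.comp_def]
  rfl

lemma sum_map_MD [Semiring R] (i : ℕ) (A : SimpleGraph (Fin n)) (f : SimpleGraph (Fin n) → R) :
    ((MD i A).map f).sum =
      (((deletionMatrix (Fin n) R i)ᵀ * deletionMatrix (Fin n) R i) *ᵥ f) A := by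
  have sum_add_edges (X : Finset (Sym2 (Fin n))) :
      ((((A.deleteEdges (X : Set (Sym2 (Fin n))))ᶜ.edgeFinset.powersetCard i).val.map fun Y =>
        SimpleGraph.fromEdgeSet (((A.edgeFinset \ X) ∪ Y : Finset (Sym2 (Fin n))) :
          Set (Sym2 (Fin n)))).map f).sum =
        (deletionMatrix (Fin n) R i *ᵥ f) (A.deleteEdges (X : Set (Sym2 (Fin n)))) := by
    rw [deletionMatrix_mulVec, ← sum_sup_fromEdgeSet_powersetCard, Multiset.map_map]
    exact Finset.sum_congr rfl fun Y _ => congrArg f (fromEdgeSet_sdiff_union A X Y)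
  rw [← mulVec_mulVec, deletionMatrix_transpose_mulVec, ← sum_deleteEdges_powersetCard, MD,
    Multiset.map_bind, Multiset.sum_bind]
  exact Finset.sum_congr rfl fun X _ => sum_add_edges X

lemma isoClass_relabel (σ : Equiv.Perm (Fin n)) (A : SimpleGraph (Fin n)) :
    isoClass (σ • A) = isoClass A :=
  Quotient.sound ⟨SimpleGraph.Iso.comap σ.symm A⟩

lemma exists_eq_comp_isoClass {β : Type*} {f : SimpleGraph (Fin n) → β}
    (hf : ∀ (σ : Equiv.Perm (Fin n)) A, f (σ • A) = f A) :
    ∃ ψ : Quotient (isoSetoid n) → β, f = ψ ∘ isoClass := by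
  refine ⟨Quotient.lift f fun A B ⟨e⟩ => ?_, rfl⟩
  have relabel_eq : e.toEquiv • A = B := by
    ext u v
    exact e.symm.map_adj_iff
  rw [← relabel_eq, hf]

lemma exists_sum_map_MD_eq_sum_map_ED (i : ℕ) (φ : Quotient (isoSetoid n) → ℚ) :
    ∃ ψ : Quotient (isoSetoid n) → ℚ, ∀ A : SimpleGraph (Fin n),
      (((MD i A).map isoClass).map ψ).sum = (((ED i A).map isoClass).map φ).sum := by
  obtain ⟨f, f_invariant, hf⟩ := exists_invariant_transpose_mul_self_mulVec_eq
    (g := φ ∘ isoClass) (deletionMatrix_relabel (R := ℚ) (V := Fin n) i)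
    fun σ A => congrArg φ (isoClass_relabel σ A)
  obtain ⟨ψ, rfl⟩ := exists_eq_comp_isoClass f_invariant
  refine ⟨ψ, fun A => ?_⟩
  rw [Multiset.map_map, Multiset.map_map, sum_map_MD, sum_map_ED, hf]

end Decks

theorem edge_deck_determined_by_modified_deck_general (n i : ℕ) (G H : SimpleGraph (Fin n))
    (h : (MD i G).map isoClass = (MD i H).map isoClass) :
    (ED i G).map isoClass = (ED i H).map isoClass := by
  refine multiset_eq_of_forall_sum_map_eq ℚ fun φ => ?_
  obtain ⟨ψ, hψ⟩ := exists_sum_map_MD_eq_sum_map_ED i φ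
  rw [← hψ G, ← hψ H, h]

/-- The `1`-edge deck of a graph can be constructed from its modified `1`-deck:
if the modified `1`-decks of two `m`-edge graphs agree up to isomorphism, then so
do their `1`-edge decks. -/
theorem edge_deck_determined_by_modified_deck (n m : ℕ) (G H : SimpleGraph (Fin n))
    (hG : G.edgeFinset.card = m) (hH : H.edgeFinset.card = m)
    (h : (MD 1 G).map isoClass = (MD 1 H).map isoClass) :
    (ED 1 G).map isoClass = (ED 1 H).map isoClass :=
  edge_deck_determined_by_modified_deck_general n 1 G H h

end
end

section
/- Suppose 2m > N. Then the modified 1-deck matrix B_1 = m · I + A(J(N,m)), regarded as a matrix over ℚ, is invertible. (Equivalently, −m is not an eigenvalue of the Johnson graph J(N,m) when m > N/2.) -/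
/-!
In the modified 1-deck operation the added element is determined by the source, the target and the
removed element, so `B_1 = m I + A`, where `A = J N m 1` is the adjacency matrix of the Johnson
graph. Let `W` be the inclusion matrix of `m`-subsets in `(m + 1)`-subsets. Every `m`-subset lies in
`N - m` sets of size `m + 1`, and two distinct `m`-subsets lie in a common one (their union)
exactly when they are adjacent, so `Wᵀ W = (N - m) I + A`. Hence `B_1 = (2m - N) I + Wᵀ W`, which is
positive definite when `2m > N`.
-/

open Finset

/-- `Omega N m` is the type of `m`-element subsets of `Fin N`. -/
abbrev Omega (N m : ℕ) := {S : Finset (Fin N) // S.card = m}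

/-- `J N m i` is the Ω × Ω integer matrix whose `(S, T)` entry is `1` if
`|S ∩ T| = m − i` (i.e. `|S ∩ T| + i = m`) and `0` otherwise.  It encodes
the perturbed `i`-deck operation: remove `i` elements and add `i` elements
not originally present. -/
def J (N m i : ℕ) : Matrix (Omega N m) (Omega N m) ℤ := fun S T =>
  if ((S : Finset (Fin N)) ∩ (T : Finset (Fin N))).card + i = m then 1 else 0

/-- `B N m k` is the Ω × Ω integer matrix whose `(T, S)` entry is the number of
pairs `(X, Y)` with `X ⊆ S`, `|X| = k`, `Y ∩ (S \ X) = ∅`, `|Y| = k` and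
`(S \ X) ∪ Y = T`.  It encodes the modified `k`-deck operation: remove `k`
elements, then add `k` elements not currently present (an added element may
coincide with a removed one). -/
def B (N m k : ℕ) : Matrix (Omega N m) (Omega N m) ℤ := fun T S =>
  ((Finset.univ.filter (fun p : Finset (Fin N) × Finset (Fin N) =>
      p.1 ⊆ (S : Finset (Fin N)) ∧ p.1.card = k ∧
      p.2 ∩ ((S : Finset (Fin N)) \ p.1) = ∅ ∧ p.2.card = k ∧
      ((S : Finset (Fin N)) \ p.1) ∪ p.2 = (T : Finset (Fin N)))).card : ℤ)

open scoped Matrix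

section Counting

variable {α : Type*} [DecidableEq α] {s t : Finset α} {n : ℕ}

lemma card_sdiff_pos_of_card_le (hcard : #t ≤ #s) (hst : s ≠ t) : 0 < #(s \ t) := by
  rw [card_pos, sdiff_nonempty]
  exact fun h => hst (eq_of_subset_of_card_le h hcard)

lemma card_filter_subset_powersetCard_card_add (hst : s ⊆ t) (k : ℕ) :
    #{u ∈ t.powersetCard (#s + k) | s ⊆ u} = (#t - #s).choose k := by
  rw [← card_sdiff_of_subset hst, ← card_powersetCard]
  refine card_nbij' (· \ s) (· ∪ s) ?_ ?_ ?_ ?_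
  · intro u hu
    simp only [mem_coe, mem_filter, mem_powersetCard] at hu ⊢
    obtain ⟨⟨hut, hu⟩, hsu⟩ := hu
    exact ⟨sdiff_subset_sdiff hut subset_rfl, by rw [card_sdiff_of_subset hsu]; omega⟩
  · intro v hv
    simp only [mem_coe, mem_filter, mem_powersetCard, subset_sdiff] at hv ⊢
    obtain ⟨⟨hvt, hvs⟩, rfl⟩ := hv
    exact ⟨⟨union_subset hvt hst, by rw [card_union_of_disjoint hvs, add_comm]⟩,
      subset_union_right⟩
  · intro u hu
    exact sdiff_union_of_subset (mem_filter.1 hu).2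
  · intro v hv
    exact union_sdiff_cancel_right (subset_sdiff.1 (mem_powersetCard.1 hv).1).2

lemma card_filter_subset_powersetCard_of_le_card (hst : s ⊆ t) (hn : n ≤ #s) :
    #{u ∈ t.powersetCard n | s ⊆ u} = if #s = n then 1 else 0 := by
  split_ifs with hs
  · simpa [hs] using card_filter_subset_powersetCard_card_add hst 0
  · rw [card_eq_zero, filter_eq_empty_iff]
    intro u hu hsu
    exact hs (((card_le_card hsu).trans_eq (mem_powersetCard.1 hu).2).antisymm hn)

end Counting

section JohnsonScheme

variable {N m : ℕ}

lemma card_sdiff_pos_of_ne {S T : Omega N m} (hST : S ≠ T) : 0 < #(S.1 \ T.1) :=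
  card_sdiff_pos_of_card_le (T.2.trans S.2.symm).le (Subtype.coe_ne_coe.2 hST)

lemma J_apply_eq_ite_card_sdiff (i : ℕ) (S T : Omega N m) :
    J N m i S T = if #(T.1 \ S.1) = i then 1 else 0 := by
  have h := card_inter_add_card_sdiff T.1 S.1
  rw [T.2, inter_comm] at h
  unfold J
  exact if_congr (by omega) rfl rfl

lemma B_apply (k : ℕ) (T S : Omega N m) :
    B N m k T S = #{X ∈ S.1.powersetCard k | S.1 \ T.1 ⊆ X} := by
  unfold B
  norm_cast
  refine card_nbij' Prod.fst (fun X => (X, T.1 \ (S.1 \ X))) ?_ ?_ ?_ ?_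
  · rintro ⟨X, Y⟩ h
    grind
  · intro X h
    simp only [mem_coe, mem_filter, mem_powersetCard, mem_univ, true_and] at h ⊢
    obtain ⟨⟨hXS, hX⟩, hST⟩ := h
    have hsub : S.1 \ X ⊆ T.1 := by grind
    refine ⟨hXS, hX, sdiff_inter_self _ _, ?_, union_sdiff_of_subset hsub⟩
    have hkm : k ≤ m := by rw [← hX, ← S.2]; exact card_le_card hXS
    rw [card_sdiff_of_subset hsub, card_sdiff_of_subset hXS, T.2, S.2, hX]
    omega
  · rintro ⟨X, Y⟩ h
    simp only [mem_coe, mem_filter, mem_univ, true_and] at h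
    obtain ⟨-, -, hdisj, -, hunion⟩ := h
    have hY : T.1 \ (S.1 \ X) = Y := by
      rw [← hunion, union_sdiff_cancel_left (disjoint_iff_inter_eq_empty.2 hdisj).symm]
    simp only [hY]
  · intro X _
    rfl

theorem B_one_eq_smul_one_add_J (N m : ℕ) : B N m 1 = (m : ℤ) • 1 + J N m 1 := by
  ext T S
  rw [B_apply, Matrix.add_apply, Matrix.smul_apply, J_apply_eq_ite_card_sdiff]
  obtain rfl | hTS := eq_or_ne T S
  · simp [T.2]
  · rw [card_filter_subset_powersetCard_of_le_card sdiff_subset (card_sdiff_pos_of_ne hTS.symm),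
      Matrix.one_apply_ne hTS]
    simp

/-- The inclusion matrix of `m`-subsets in `n`-subsets of `Fin N`: the `(Q, S)` entry is `1` if
`S ⊆ Q` and `0` otherwise. For `n = m + 1` it is the matrix of the raising operator of the Boolean
lattice between two consecutive levels. -/
def inclusionMatrix (N m n : ℕ) : Matrix (Omega N n) (Omega N m) ℤ :=
  Matrix.of fun Q S => if S.1 ⊆ Q.1 then 1 else 0

lemma inclusionMatrix_transpose_mul_self_apply (n : ℕ) (S T : Omega N m) :
    ((inclusionMatrix N m n)ᵀ * inclusionMatrix N m n) S T =
      #{Q ∈ powersetCard n univ | S.1 ∪ T.1 ⊆ Q} := by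
  have hmem (Q : Finset (Fin N)) : Q ∈ powersetCard n univ ↔ #Q = n := mem_powersetCard_univ
  rw [Matrix.mul_apply, natCast_card_filter]
  simp only [inclusionMatrix, Matrix.transpose_apply, Matrix.of_apply, union_subset_iff, ite_and,
    ite_mul, one_mul, zero_mul]
  symm
  exact sum_subtype _ hmem _

theorem inclusionMatrix_succ_transpose_mul_self (N m : ℕ) :
    (inclusionMatrix N m (m + 1))ᵀ * inclusionMatrix N m (m + 1) =
      (N - m : ℤ) • 1 + J N m 1 := by
  ext S T
  rw [inclusionMatrix_transpose_mul_self_apply, Matrix.add_apply, Matrix.smul_apply,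
    J_apply_eq_ite_card_sdiff]
  obtain rfl | hST := eq_or_ne S T
  · have hcount := card_filter_subset_powersetCard_card_add (subset_univ S.1) 1
    have hmN : m ≤ N := by simpa [S.2] using card_le_univ S.1
    rw [S.2] at hcount
    simp [hcount, hmN]
  · have hcard : #(S.1 ∪ T.1) = m + #(T.1 \ S.1) := by
      have h := card_sdiff_add_card T.1 S.1
      rw [S.2, union_comm] at h
      omega
    have hpos := card_sdiff_pos_of_ne hST.symm
    rw [card_filter_subset_powersetCard_of_le_card (subset_univ _) (by omega), hcard,
      Matrix.one_apply_ne hST]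
    simp

theorem B_one_eq_smul_one_add_transpose_mul_self (N m : ℕ) :
    B N m 1 = (2 * m - N : ℤ) • 1 +
      (inclusionMatrix N m (m + 1))ᵀ * inclusionMatrix N m (m + 1) := by
  rw [B_one_eq_smul_one_add_J, inclusionMatrix_succ_transpose_mul_self, ← add_assoc, ← add_smul]
  congr 2
  ring

theorem posDef_map_B_one (h : N < 2 * m) : ((B N m 1).map (Int.cast : ℤ → ℚ)).PosDef := by
  set W : Matrix (Omega N (m + 1)) (Omega N m) ℚ := (inclusionMatrix N m (m + 1)).map Int.cast
  have hB : (B N m 1).map (Int.cast : ℤ → ℚ) = (2 * m - N : ℚ) • 1 + Wᴴ * W := by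
    rw [B_one_eq_smul_one_add_transpose_mul_self]
    ext S T
    simp only [Matrix.map_apply, Matrix.add_apply, Matrix.smul_apply]
    simp [W, Matrix.mul_apply, Matrix.one_apply]
  have hc : (0 : ℚ) < 2 * m - N := sub_pos.2 (by exact_mod_cast h)
  rw [hB]
  exact (Matrix.PosDef.one.smul hc).add_posSemidef (Matrix.posSemidef_conjTranspose_mul_self W)

end JohnsonScheme

/-- If `2m > N` then the modified `1`-deck matrix `B_1`, regarded as a matrix
over `ℚ`, is invertible. -/
theorem modified_one_invertible (N m : ℕ) (hm : m ≤ N) (h : 2 * m > N) :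
    IsUnit ((B N m 1).map (Int.cast : ℤ → ℚ)) :=
  (posDef_map_B_one h).isUnit
end

section
/- (Lovász's edge reconstruction theorem.) Let G and H be simple graphs on Fin n, each with exactly m edges, where 2m > C(n,2). If the 1-edge decks ED_1(G) and ED_1(H) agree up to isomorphism (the multisets of isomorphism classes of G − e over e ∈ E(G) and of H − e over e ∈ E(H) coincide), then G and H are isomorphic. -/
/-!
Lovász's argument. Let `inj(A, B)` be the number of injective homomorphisms from `A` to `B`.

* Kelly's lemma: an injective homomorphism `A → B` survives the deletion of exactly the
  `|E(B)| - |E(A)|` edges of `B` that it does not use. Hence the `1`-edge deck of `B` determines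
  `inj(A, B)` whenever `A` has fewer edges than `B`.
* Inclusion–exclusion: `inj(A, Bᶜ) = ∑ X ⊆ E(A), (-1)^|X| * inj((V(A), X), B)`.

Take `A = G`, and for `B` first `G` and then `H`. An injective homomorphism `G → Bᶜ` would put
`2 |E(G)| > C(n, 2)` edges on `n` vertices, so both alternating sums vanish. By Kelly's lemma they
agree in every term with `X ≠ E(G)`, so `inj(G, H) = inj(G, G) > 0`, and an injective homomorphism
between graphs with the same numbers of vertices and edges is an isomorphism.
-/

open Finset

noncomputable section
open scoped Classical

section
open SimpleGraph

variable {U V W : Type*}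

section Containment

theorem card_edgeFinset_le_of_isContained {A : SimpleGraph V} {B : SimpleGraph W}
    [Fintype A.edgeSet] [Fintype B.edgeSet] (h : A ⊑ B) : #A.edgeFinset ≤ #B.edgeFinset := by
  obtain ⟨f⟩ := h
  simpa only [card_edgeSet] using Fintype.card_le_of_embedding f.mapEdgeSet

theorem nonempty_iso_of_isContained [Finite W] {A : SimpleGraph V} {B : SimpleGraph W}
    [Fintype A.edgeSet] [Fintype B.edgeSet] (h : A ⊑ B) (hcard : Nat.card W ≤ Nat.card V)
    (hedges : #B.edgeFinset ≤ #A.edgeFinset) : Nonempty (A ≃g B) := by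
  obtain ⟨f⟩ := h
  have := Fintype.ofFinite W
  let φ : V ≃ W := Equiv.ofBijective f (f.injective.bijective_of_nat_card_le hcard)
  have hle : A.map φ ≤ B := (map_le_iff_le_comap φ.toEmbedding A B).2 f.toHom.le_comap
  have hmap : A.map φ = B := by
    refine edgeFinset_inj.1 (eq_of_subset_of_card_le (edgeFinset_mono hle) ?_)
    rwa [← (Iso.map φ A).card_edgeFinset_eq]
  exact ⟨hmap ▸ Iso.map φ A⟩

theorem free_compl_of_choose_two_lt [Fintype W] {A : SimpleGraph V} {B : SimpleGraph W}
    [Fintype A.edgeSet] [Fintype B.edgeSet]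
    (h : (Fintype.card W).choose 2 < #A.edgeFinset + #B.edgeFinset) : A.Free Bᶜ := by
  intro hA
  have hle : #A.edgeFinset ≤ #Bᶜ.edgeFinset := card_edgeFinset_le_of_isContained hA
  have hadd : #B.edgeFinset + #Bᶜ.edgeFinset ≤ (Fintype.card W).choose 2 := by
    rw [← card_union_of_disjoint (disjoint_edgeFinset.2 disjoint_compl_right), ← edgeFinset_sup]
    exact card_edgeFinset_le_card_choose_two
  lia

end Containment

section EdgeSet

theorem edgeSet_fromEdgeSet_of_subset_edgeSet {A : SimpleGraph V} {X : Set (Sym2 V)}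
    (hX : X ⊆ A.edgeSet) : (fromEdgeSet X).edgeSet = X := by
  rw [edgeSet_fromEdgeSet, sdiff_eq_left]
  exact Set.subset_compl_iff_disjoint_right.1 (hX.trans A.edgeSet_subset_compl_diagSet)

theorem map_le_iff_forall_map_mem_edgeSet (A : SimpleGraph V) (B : SimpleGraph W) (f : V ↪ W) :
    A.map f ≤ B ↔ ∀ e ∈ A.edgeSet, e.map f ∈ B.edgeSet := by
  rw [← edgeSet_subset_edgeSet, edgeSet_map, Set.image_subset_iff]
  rfl

theorem map_le_compl_iff_forall_map_notMem_edgeSet (A : SimpleGraph V) (B : SimpleGraph W)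
    (f : V ↪ W) : A.map f ≤ Bᶜ ↔ ∀ e ∈ A.edgeSet, e.map f ∉ B.edgeSet := by
  rw [le_compl_iff_disjoint_right, ← disjoint_edgeSet, edgeSet_map, Set.disjoint_left,
    Set.forall_mem_image]
  rfl

end EdgeSet

section LabelledCopyCount

variable [Fintype U] [Fintype V] [Fintype W]

theorem labelledCopyCount_eq_card_filter_map_le (A : SimpleGraph V) (B : SimpleGraph W) :
    B.labelledCopyCount A = #{f : V ↪ W | A.map f ≤ B} := by
  rw [← Fintype.card_subtype]
  exact Fintype.card_congr
    { toFun f := ⟨f.toEmbedding, (map_le_iff_le_comap _ _ _).2 f.toHom.le_comap⟩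
      invFun f := ⟨⟨f.1, fun h ↦ (map_le_iff_le_comap _ _ _).1 f.2 h⟩, f.1.injective⟩
      left_inv _ := rfl
      right_inv _ := rfl }

theorem labelledCopyCount_eq_of_iso (A : SimpleGraph V) {B : SimpleGraph U} {C : SimpleGraph W}
    (φ : B ≃g C) : B.labelledCopyCount A = C.labelledCopyCount A :=
  Fintype.card_congr
    { toFun f := φ.toCopy.comp f
      invFun f := φ.symm.toCopy.comp f
      left_inv f := by ext v; exact φ.symm_apply_apply (f v)
      right_inv f := by ext v; exact φ.apply_symm_apply (f v) }

theorem labelledCopyCount_compl (A : SimpleGraph V) (B : SimpleGraph W) [Fintype A.edgeSet] :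
    (Bᶜ.labelledCopyCount A : ℤ) = ∑ X ∈ A.edgeFinset.powerset,
      (-1) ^ #X * (B.labelledCopyCount (fromEdgeSet (X : Set (Sym2 V))) : ℤ) := by
  let S (e : Sym2 V) : Finset (V ↪ W) := {f | e.map f ∈ B.edgeSet}
  have hcompl : ({f : V ↪ W | A.map f ≤ Bᶜ} : Finset _) = A.edgeFinset.inf fun e ↦ (S e)ᶜ := by
    ext f
    simp [S, map_le_compl_iff_forall_map_notMem_edgeSet, mem_inf]
  have hcopies (X : Finset (Sym2 V)) (hX : X ⊆ A.edgeFinset) :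
      ({f : V ↪ W | (fromEdgeSet (X : Set (Sym2 V))).map f ≤ B} : Finset _) = X.inf S := by
    ext f
    rw [← coe_subset, coe_edgeFinset] at hX
    simp [-edgeSet_fromEdgeSet, S, map_le_iff_forall_map_mem_edgeSet,
      edgeSet_fromEdgeSet_of_subset_edgeSet hX, mem_inf]
  rw [labelledCopyCount_eq_card_filter_map_le, hcompl, inclusion_exclusion_card_inf_compl]
  refine sum_congr rfl fun X hX ↦ ?_
  rw [labelledCopyCount_eq_card_filter_map_le, hcopies X (mem_powerset.1 hX)]

theorem labelledCopyCount_eq_of_forall_ssubset {A : SimpleGraph V} [Fintype A.edgeSet]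
    {B : SimpleGraph U} {C : SimpleGraph W}
    (hcompl : Bᶜ.labelledCopyCount A = Cᶜ.labelledCopyCount A)
    (hssub : ∀ X ⊂ A.edgeFinset, B.labelledCopyCount (fromEdgeSet (X : Set (Sym2 V))) =
      C.labelledCopyCount (fromEdgeSet (X : Set (Sym2 V)))) :
    B.labelledCopyCount A = C.labelledCopyCount A := by
  have hproper : ∀ X ∈ A.edgeFinset.powerset.erase A.edgeFinset,
      (-1 : ℤ) ^ #X * (B.labelledCopyCount (fromEdgeSet (X : Set (Sym2 V))) : ℤ) =
        (-1) ^ #X * (C.labelledCopyCount (fromEdgeSet (X : Set (Sym2 V))) : ℤ) := by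
    intro X hX
    rw [hssub X (mem_ssubsets.1 hX)]
  have hsum := congrArg (Nat.cast : ℕ → ℤ) hcompl
  rw [labelledCopyCount_compl, labelledCopyCount_compl,
    ← sum_erase_add _ _ (mem_powerset_self A.edgeFinset),
    ← sum_erase_add _ _ (mem_powerset_self A.edgeFinset), sum_congr rfl hproper, add_right_inj,
    coe_edgeFinset, fromEdgeSet_edgeSet] at hsum
  exact_mod_cast mul_left_cancel₀ (pow_ne_zero _ (by norm_num)) hsum

end LabelledCopyCount

section EdgeDeck

/-- The `1`-edge deck of a graph with finitely many edges, on an arbitrary vertex type: the multiset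
of its edge-deleted subgraphs, as labelled graphs. It extends `ED 1` beyond the vertex types
`Fin n`. Decks on different vertex types are compared up to isomorphism by `Multiset.Rel`, that is,
by matching their members in isomorphic pairs. -/
def edgeDeck (G : SimpleGraph V) [Fintype G.edgeSet] : Multiset (SimpleGraph V) :=
  G.edgeFinset.val.map fun e ↦ G.deleteEdges {e}

theorem card_edgeFinset_eq_of_rel_edgeDeck {r : SimpleGraph V → SimpleGraph W → Prop}
    {G : SimpleGraph V} {H : SimpleGraph W} [Fintype G.edgeSet] [Fintype H.edgeSet]
    (h : Multiset.Rel r (edgeDeck G) (edgeDeck H)) : #G.edgeFinset = #H.edgeFinset := by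
  simpa only [edgeDeck, Multiset.card_map, card_val] using Multiset.card_eq_card_of_rel h

theorem card_filter_le_deleteEdges {K B : SimpleGraph W} [Fintype K.edgeSet] [Fintype B.edgeSet]
    (h : K ≤ B) :
    #{e ∈ B.edgeFinset | K ≤ B.deleteEdges {e}} = #B.edgeFinset - #K.edgeFinset := by
  have hunused : {e ∈ B.edgeFinset | K ≤ B.deleteEdges {e}} = B.edgeFinset \ K.edgeFinset := by
    ext e
    simp [deleteEdges, le_sdiff, h]
  rw [hunused, card_sdiff_of_subset (edgeFinset_mono h)]

variable [Fintype V] [Fintype W]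

/-- Kelly's lemma. Truncation of the subtraction is harmless: if `|E(A)| > |E(B)|`, then `B` has no
copy of `A`. -/
theorem sum_labelledCopyCount_edgeDeck (A : SimpleGraph V) (B : SimpleGraph W) [Fintype A.edgeSet]
    [Fintype B.edgeSet] :
    ((edgeDeck B).map (labelledCopyCount · A)).sum =
      (#B.edgeFinset - #A.edgeFinset) * B.labelledCopyCount A := by
  have hunused (f : V ↪ W) : #{e ∈ B.edgeFinset | A.map f ≤ B.deleteEdges {e}} =
      if A.map f ≤ B then #B.edgeFinset - #A.edgeFinset else 0 := by
    split_ifs with hf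
    · rw [card_filter_le_deleteEdges hf]
      congr 1
      convert card_edgeFinset_map f A
    · exact card_eq_zero.2 <| filter_eq_empty_iff.2 fun e _ he ↦ hf (he.trans (deleteEdges_le _))
  calc ((edgeDeck B).map (labelledCopyCount · A)).sum
      = ∑ e ∈ B.edgeFinset, #{f : V ↪ W | A.map f ≤ B.deleteEdges {e}} := by
        simp only [edgeDeck, labelledCopyCount_eq_card_filter_map_le, Multiset.map_map,
          Function.comp_apply, sum_map_val]
    _ = ∑ f : V ↪ W, #{e ∈ B.edgeFinset | A.map f ≤ B.deleteEdges {e}} :=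
        sum_card_bipartiteAbove_eq_sum_card_bipartiteBelow _
    _ = (#B.edgeFinset - #A.edgeFinset) * B.labelledCopyCount A := by
        rw [labelledCopyCount_eq_card_filter_map_le, sum_congr rfl fun f _ ↦ hunused f,
          ← sum_filter, sum_const, smul_eq_mul, mul_comm]

variable [Fintype U]

theorem labelledCopyCount_eq_of_rel_edgeDeck {A : SimpleGraph U} {G : SimpleGraph V}
    {H : SimpleGraph W} [Fintype A.edgeSet] [Fintype G.edgeSet] [Fintype H.edgeSet]
    (hdeck : Multiset.Rel (fun K L ↦ Nonempty (K ≃g L)) (edgeDeck G) (edgeDeck H))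
    (hA : #A.edgeFinset < #G.edgeFinset) :
    G.labelledCopyCount A = H.labelledCopyCount A := by
  have hedges : #G.edgeFinset = #H.edgeFinset := card_edgeFinset_eq_of_rel_edgeDeck hdeck
  have hcounts : (edgeDeck G).map (labelledCopyCount · A) =
      (edgeDeck H).map (labelledCopyCount · A) := by
    rw [← Multiset.rel_eq, Multiset.rel_map]
    exact hdeck.mono fun K _ L _ ⟨φ⟩ ↦ labelledCopyCount_eq_of_iso A φ
  have hsum := congrArg Multiset.sum hcounts
  rw [sum_labelledCopyCount_edgeDeck, sum_labelledCopyCount_edgeDeck, ← hedges] at hsum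
  exact Nat.eq_of_mul_eq_mul_left (Nat.sub_pos_of_lt hA) hsum

end EdgeDeck

theorem lovasz_edge_reconstruction_general [Fintype V] {G : SimpleGraph V} {H : SimpleGraph W}
    [Fintype G.edgeSet] [Fintype H.edgeSet]
    (hG : (Fintype.card V).choose 2 < 2 * #G.edgeFinset)
    (hdeck : Multiset.Rel (fun K L ↦ Nonempty (K ≃g L)) (edgeDeck G) (edgeDeck H)) :
    Nonempty (G ≃g H) := by
  have hedges : #G.edgeFinset = #H.edgeFinset := card_edgeFinset_eq_of_rel_edgeDeck hdeck
  obtain ⟨φ⟩ : Nonempty (V ≃ W) := by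
    obtain ⟨e, he⟩ : G.edgeFinset.Nonempty := card_pos.1 (by lia)
    obtain ⟨_, _, ⟨φ⟩⟩ := Multiset.exists_mem_of_rel_of_mem hdeck (Multiset.mem_map_of_mem _ he)
    exact ⟨φ.toEquiv⟩
  have := Fintype.ofEquiv V φ
  have hverts : Fintype.card V = Fintype.card W := Fintype.card_congr φ
  have hcount : G.labelledCopyCount G = H.labelledCopyCount G := by
    refine labelledCopyCount_eq_of_forall_ssubset ?_ fun X hX ↦ ?_
    · rw [labelledCopyCount_eq_zero.2 (free_compl_of_choose_two_lt (by lia)),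
        labelledCopyCount_eq_zero.2 (free_compl_of_choose_two_lt (by lia))]
    · have hsub : (fromEdgeSet (X : Set (Sym2 V))).edgeFinset ⊆ X := by
        rw [← coe_subset, coe_edgeFinset, edgeSet_fromEdgeSet]
        exact Set.sdiff_subset
      exact labelledCopyCount_eq_of_rel_edgeDeck hdeck (card_lt_card (hsub.trans_ssubset hX))
  have hcontained : G ⊑ H :=
    labelledCopyCount_pos.1 (hcount ▸ labelledCopyCount_pos.2 (IsContained.refl G))
  exact nonempty_iso_of_isContained hcontained (by simp [hverts]) hedges.ge

theorem ED_one {n : ℕ} (G : SimpleGraph (Fin n)) : ED 1 G = edgeDeck G := by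
  simp [ED, edgeDeck, powersetCard_one]

theorem map_isoClass_eq_iff_rel {n : ℕ} {P Q : Multiset (SimpleGraph (Fin n))} :
    P.map isoClass = Q.map isoClass ↔ Multiset.Rel (fun A B ↦ Nonempty (A ≃g B)) P Q := by
  rw [← Multiset.rel_eq, Multiset.rel_map]
  simp only [isoClass, Quotient.eq]
  rfl

end

/-- Lovász's edge reconstruction theorem: two `m`-edge graphs on `Fin n` with
`2m > C(n,2)` and the same `1`-edge deck up to isomorphism are isomorphic. -/
theorem lovasz_edge_reconstruction (n m : ℕ) (G H : SimpleGraph (Fin n))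
    (hG : G.edgeFinset.card = m) (hH : H.edgeFinset.card = m)
    (hm : 2 * m > n.choose 2)
    (h : (ED 1 G).map isoClass = (ED 1 H).map isoClass) :
    Nonempty (G ≃g H) := by
  refine lovasz_edge_reconstruction_general (by rwa [Fintype.card_fin, hG]) ?_
  rwa [← ED_one, ← ED_one, ← map_isoClass_eq_iff_rel]

end
end
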